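/- arXiv:1506.05355 — 5 statements merged into one kernel-verified Lean document; each statement's English description precedes it below -/
import Mathlib

section
/- Let p be a prime and let m > 1 be a natural number that is not a power of p. Let l be the largest natural number with p^l < m. Then p does not divide the binomial coefficient C(m, p^l). -/
/-- If `p` is prime, `m > 1` is not a power of `p`, and `l` is the largest natural
number with `p^l < m`, then `p` does not divide `C(m, p^l)`. -/
theorem not_dvd_choose_pow_of_not_pow (p m l : ℕ) (hp : p.Prime) (hm : 1 < m)
    (hnp : ¬ ∃ s : ℕ, m = p ^ s)
    (hl : p ^ l < m) (hmax : ∀ l' : ℕ, p ^ l' < m → l' ≤ l) :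
    ¬ p ∣ Nat.choose m (p ^ l) := by
  have hlt : m < p ^ (l + 1) := by
    rcases lt_trichotomy m (p ^ (l + 1)) with h | h | h
    · exact h
    · exact absurd ⟨_, h⟩ hnp
    · have := hmax _ h
      omega
  have hlog : Nat.log p m < l + 1 := Nat.log_lt_of_lt_pow (by omega) hlt
  rw [← emultiplicity_eq_zero, hp.emultiplicity_choose hl.le hlog]
  norm_cast
  rw [Finset.card_eq_zero, Finset.filter_eq_empty_iff]
  intro i hi
  rw [Finset.mem_Ico] at hi
  have h0 : p ^ l % p ^ i = 0 := Nat.mod_eq_zero_of_dvd (pow_dvd_pow p (by omega))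
  have h1 := Nat.mod_lt (m - p ^ l) (pow_pos hp.pos i)
  omega
end

section
/- Let n be an even positive integer such that n + 1 is not a power of any prime, and let p be a prime dividing n + 1. Then there exists a natural number i with 4 ≤ i and 2i ≤ n + 1 such that p does not divide the binomial coefficient C(n+1, i). -/
theorem top_pow_aux (p : ℕ) (hp : p.Prime) : ∀ (l N : ℕ), p ^ l ≤ N → N < p ^ (l + 1) →
    ¬ p ∣ Nat.choose N (p ^ l) := by
  intro l
  induction l with
  | zero =>
    intro N h1 h2 h
    simp at h1 h2 h
    have := Nat.le_of_dvd (by omega) h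
    omega
  | succ l ih =>
    intro N h1 h2 h
    haveI : Fact p.Prime := ⟨hp⟩
    have key := Choose.choose_modEq_choose_mod_mul_choose_div_nat (n := N) (k := p ^ (l + 1)) (p := p)
    have e1 : p ^ (l + 1) % p = 0 := Nat.mod_eq_zero_of_dvd (dvd_pow_self p (by omega))
    have e2 : p ^ (l + 1) / p = p ^ l := by
      rw [pow_succ, Nat.mul_div_cancel _ hp.pos]
    rw [e1, e2, Nat.choose_zero_right, one_mul] at key
    refine ih (N / p) ?_ ?_ ((key.dvd_iff dvd_rfl).1 h)
    · rw [Nat.le_div_iff_mul_le hp.pos, ← pow_succ]; exact h1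
    · rw [Nat.div_lt_iff_lt_mul hp.pos, ← pow_succ]; exact h2

/-- If `n` is an even positive integer such that `n + 1` is not a prime power, and
`p` is a prime dividing `n + 1`, then there is `i` with `4 ≤ i`, `2 * i ≤ n + 1`
and `p` not dividing `C(n+1, i)`. -/
theorem exists_choose_not_dvd (n p : ℕ) (hn : 0 < n) (hev : Even n)
    (hnp : ¬ ∃ (q k : ℕ), q.Prime ∧ 1 ≤ k ∧ n + 1 = q ^ k)
    (hp : p.Prime) (hdvd : p ∣ n + 1) :
    ∃ i : ℕ, 4 ≤ i ∧ 2 * i ≤ n + 1 ∧ ¬ p ∣ Nat.choose (n + 1) i := by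
  obtain ⟨l, hl⟩ : ∃ l, l = Nat.log p (n + 1) := ⟨_, rfl⟩
  have h1 : p ^ l ≤ n + 1 := hl ▸ Nat.pow_log_le_self p (by omega)
  have h2 : n + 1 < p ^ (l + 1) := hl ▸ Nat.lt_pow_succ_log_self hp.one_lt _
  have hc := top_pow_aux p hp l _ h1 h2
  have hpn := Nat.le_of_dvd (by omega) hdvd
  have hl1 : 1 ≤ l := by
    by_contra h
    have : l = 0 := by omega
    subst this
    simp at h2
    omega
  have hne : n + 1 ≠ p ^ l := fun h => hnp ⟨p, l, hp, hl1, h⟩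
  have hoddN : Odd (n + 1) := hev.add_one
  have hpodd : Odd p := hoddN.of_dvd_nat hdvd
  have hqodd : Odd (p ^ l) := hpodd.pow
  have hp2 := hp.two_le
  have hp3 : 3 ≤ p := by
    rcases hpodd with ⟨k, hk⟩; omega
  have hd : p ∣ n + 1 - p ^ l := Nat.dvd_sub hdvd (dvd_pow_self p (by omega))
  have h3 : p ≤ n + 1 - p ^ l := Nat.le_of_dvd (by omega) hd
  have hb : 4 ≤ n + 1 - p ^ l := by
    rcases hoddN with ⟨a, ha⟩
    rcases hqodd with ⟨b, hb⟩
    omega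
  have ha : 4 ≤ p ^ l := by
    by_contra h
    have hle : p ≤ p ^ l := Nat.le_self_pow (by omega) p
    have hp3' : p = 3 := by omega
    have hl3 : p ^ l = 3 := by omega
    rw [pow_succ, hl3, hp3'] at h2
    rw [hp3'] at hdvd
    rcases hoddN with ⟨a, ha⟩
    omega
  by_cases h : 2 * p ^ l ≤ n + 1
  · exact ⟨p ^ l, ha, h, hc⟩
  · refine ⟨n + 1 - p ^ l, hb, by omega, ?_⟩
    rwa [Nat.choose_symm h1]
end

section
/- Let n be an even positive integer such that n + 1 is not a power of any prime. Then the greatest common divisor of the set {n+1} ∪ {C(n+1, i) : i ∈ ℕ, 4 ≤ i, 2i ≤ n+1} equals 1. -/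
lemma aux_lucas (p : ℕ) (hp : p.Prime) (a : ℕ) : ∀ (s t : ℕ), t < p ^ a → ¬ p ∣ s →
    ¬ p ∣ (p ^ a * s + t).choose (p ^ a) := by
  haveI := Fact.mk hp
  induction a with
  | zero =>
    intro s t ht hs
    have : t = 0 := by simpa using ht
    simpa [this] using hs
  | succ a ih =>
    intro s t ht hs h
    have hl := Choose.choose_modEq_choose_mod_mul_choose_div_nat (p := p)
      (n := p ^ (a + 1) * s + t) (k := p ^ (a + 1))
    have e1 : p ^ (a + 1) % p = 0 := by rw [pow_succ]; simp
    have e2 : p ^ (a + 1) / p = p ^ a := by rw [pow_succ]; exact Nat.mul_div_cancel _ hp.pos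
    have e3 : (p ^ (a + 1) * s + t) / p = p ^ a * s + t / p := by
      rw [show p ^ (a + 1) * s + t = t + p * (p ^ a * s) by ring, Nat.add_mul_div_left _ _ hp.pos]
      ring
    rw [e1, e2, e3, Nat.choose_zero_right, one_mul] at hl
    have ht' : t / p < p ^ a := by
      rw [Nat.div_lt_iff_lt_mul hp.pos, ← pow_succ]; exact ht
    exact ih s (t / p) ht' hs ((hl.dvd_iff dvd_rfl).1 h)

lemma aux_six (q : ℕ) : ¬ 3 ∣ (3 * (3 * q + 2)).choose 6 := by
  haveI := Fact.mk Nat.prime_three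
  intro h
  have h1 := Choose.choose_modEq_choose_mod_mul_choose_div_nat (p := 3)
      (n := 3 * (3 * q + 2)) (k := 6)
  have h2 := Choose.choose_modEq_choose_mod_mul_choose_div_nat (p := 3)
      (n := 3 * q + 2) (k := 2)
  rw [show 3 * (3 * q + 2) % 3 = 0 by omega, show 3 * (3 * q + 2) / 3 = 3 * q + 2 by omega] at h1
  rw [show (3 * q + 2) % 3 = 2 by omega, show (3 * q + 2) / 3 = q by omega] at h2
  norm_num at h1 h2
  have := ((h1.trans h2).dvd_iff dvd_rfl).1 h
  omega

lemma aux_exists (m p : ℕ) (hm : Odd m) (hp : p.Prime) (hpm : p ∣ m)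
    (hnp : ¬ ∃ (q k : ℕ), q.Prime ∧ 1 ≤ k ∧ m = q ^ k) :
    ∃ i, 4 ≤ i ∧ 2 * i ≤ m ∧ ¬ p ∣ m.choose i := by
  have hm0 : m ≠ 0 := by rintro rfl; simp at hm
  obtain ⟨a, r, hr, rfl⟩ := Nat.exists_eq_pow_mul_and_not_dvd hm0 p hp.ne_one
  have ha : a ≠ 0 := by
    rintro rfl
    simp at hpm
    exact hr hpm
  rw [Nat.odd_mul] at hm
  obtain ⟨hpo, hro⟩ := hm
  have hr1 : r ≠ 1 := by
    rintro rfl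
    exact hnp ⟨p, a, hp, by omega, by simp⟩
  have hr3 : 3 ≤ r := by
    obtain ⟨k, hk⟩ := hro
    omega
  have hple : p ≤ p ^ a := Nat.le_self_pow ha p
  by_cases h4 : 4 ≤ p ^ a
  · refine ⟨p ^ a, h4, by nlinarith, ?_⟩
    simpa using aux_lucas p hp a r 0 (by omega) hr
  have hpa : p ^ a = 3 := by
    have := hp.two_le
    obtain ⟨k, hk⟩ := hpo
    omega
  have hp3 : p = 3 := by
    have : p ∣ 3 := hpa ▸ dvd_pow_self p ha
    exact (Nat.prime_dvd_prime_iff_eq hp Nat.prime_three).1 this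
  rw [hpa]
  subst hp3
  have hmod : r % 3 = 1 ∨ r % 3 = 2 := by omega
  rcases hmod with h | h
  · obtain ⟨c, s, hs, hcs⟩ := Nat.exists_eq_pow_mul_and_not_dvd
      (show r - 1 ≠ 0 by omega) 3 (by norm_num)
    have hc : c ≠ 0 := by
      rintro rfl
      simp at hcs
      omega
    have h3c : 3 ≤ 3 ^ c := Nat.le_self_pow hc 3
    have hs2 : 2 ≤ s := by
      have h0 : s ≠ 0 := by rintro rfl; simp at hs
      have h1 : s ≠ 1 := by
        rintro rfl
        have : Odd (3 ^ c) := Odd.pow (by decide)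
        obtain ⟨k, hk⟩ := this
        obtain ⟨l, hl⟩ := hro
        omega
      omega
    have hre : 3 * r = 3 ^ (c + 1) * s + 3 := by
      rw [pow_succ, show 3 ^ c * 3 * s = 3 * (3 ^ c * s) by ring, ← hcs]
      omega
    have h3c' : 3 ^ (c + 1) = 3 ^ c * 3 := pow_succ _ _
    refine ⟨3 ^ (c + 1), by omega, by rw [hre]; nlinarith, ?_⟩
    rw [hre]
    exact aux_lucas 3 hp (c + 1) s 3 (by omega) hs
  · refine ⟨6, by norm_num, ?_, ?_⟩
    · obtain ⟨k, hk⟩ := hro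
      omega
    · have := aux_six (r / 3)
      rwa [show 3 * (r / 3) + 2 = r by omega] at this

/-- If `n` is an even positive integer and `n + 1` is not a prime power, then the
gcd of `{n+1} ∪ {C(n+1, i) : 4 ≤ i, 2i ≤ n+1}` equals `1`. -/
theorem gcd_choose_eq_one (n : ℕ) (hn : 0 < n) (hev : Even n)
    (hnp : ¬ ∃ (q k : ℕ), q.Prime ∧ 1 ≤ k ∧ n + 1 = q ^ k) :
    Nat.gcd (n + 1)
      (Finset.gcd ((Finset.range (n + 2)).filter (fun i => 4 ≤ i ∧ 2 * i ≤ n + 1))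
        (fun i => Nat.choose (n + 1) i)) = 1 := by
  by_contra hne
  obtain ⟨p, hp, hd⟩ := Nat.exists_prime_and_dvd hne
  obtain ⟨i, h4, h2, hi⟩ := aux_exists (n + 1) p hev.add_one hp
    (hd.trans (Nat.gcd_dvd_left _ _)) hnp
  refine hi ((hd.trans (Nat.gcd_dvd_right _ _)).trans (Finset.gcd_dvd ?_))
  simp only [Finset.mem_filter, Finset.mem_range]
  omega
end

section
/- Let n be an even positive integer with n + 1 = p^k for some prime p and integer k ≥ 1, and suppose (p, k) ≠ (3, 2). Then the greatest common divisor of the set {n+1} ∪ {C(n+1, i) : i ∈ ℕ, 4 ≤ i, 2i ≤ n+1} equals p. -/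
/-- If `n` is an even positive integer with `n + 1 = p^k` for a prime `p` and `k ≥ 1`,
and `(p, k) ≠ (3, 2)`, then the gcd of `{n+1} ∪ {C(n+1, i) : 4 ≤ i, 2i ≤ n+1}`
equals `p`. -/
theorem gcd_choose_eq_p (n p k : ℕ) (hn : 0 < n) (hev : Even n)
    (hp : p.Prime) (hk : 1 ≤ k) (hpow : n + 1 = p ^ k) (hne : (p, k) ≠ (3, 2)) :
    Nat.gcd (n + 1)
      (Finset.gcd ((Finset.range (n + 2)).filter (fun i => 4 ≤ i ∧ 2 * i ≤ n + 1))
        (fun i => Nat.choose (n + 1) i)) = p := by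
  have hp2 : p ≠ 2 := by
    rintro rfl
    have h1 : Even (n + 1) := by
      rw [hpow]
      exact (Nat.even_pow).2 ⟨even_two, by omega⟩
    rw [Nat.even_add_one] at h1
    exact h1 hev
  have hp3 : 3 ≤ p := by
    have := hp.two_le
    omega
  rw [hpow]
  apply Nat.dvd_antisymm
  · rcases Nat.lt_or_ge 1 k with hk2 | hk1
    · obtain ⟨m, rfl⟩ : ∃ m, k = m + 1 := ⟨k - 1, by omega⟩
      have hm : 1 ≤ m := by omega
      have h4 : 4 ≤ p ^ m := by
        rcases Nat.lt_or_ge 3 p with h | h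
        · calc 4 ≤ p := h
            _ = p ^ 1 := (pow_one p).symm
            _ ≤ p ^ m := Nat.pow_le_pow_right hp.pos hm
        · have h3 : p = 3 := by omega
          subst h3
          have hm2 : 2 ≤ m := by
            by_contra hcon
            apply hne
            have : m = 1 := by omega
            rw [this]
          calc 4 ≤ 3 ^ 2 := by norm_num
            _ ≤ 3 ^ m := Nat.pow_le_pow_right (by norm_num) hm2
      have hle : 2 * p ^ m ≤ p ^ (m + 1) := by
        rw [pow_succ]
        nlinarith
      have hdc : Nat.gcd (p ^ (m + 1))
          (Finset.gcd ((Finset.range (n + 2)).filter (fun i => 4 ≤ i ∧ 2 * i ≤ p ^ (m + 1)))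
            (fun i => Nat.choose (p ^ (m + 1)) i)) ∣ Nat.choose (p ^ (m + 1)) (p ^ m) := by
        refine (Nat.gcd_dvd_right _ _).trans ?_
        apply Finset.gcd_dvd (f := fun i => Nat.choose (p ^ (m + 1)) i)
        rw [Finset.mem_filter, Finset.mem_range]
        exact ⟨by omega, h4, hle⟩
      obtain ⟨j, -, hj⟩ := (Nat.dvd_prime_pow hp).1 (Nat.gcd_dvd_left (p ^ (m + 1))
          (Finset.gcd ((Finset.range (n + 2)).filter (fun i => 4 ≤ i ∧ 2 * i ≤ p ^ (m + 1)))
            (fun i => Nat.choose (p ^ (m + 1)) i)))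
      rw [hj] at hdc ⊢
      have hpos : Nat.choose (p ^ (m + 1)) (p ^ m) ≠ 0 :=
        (Nat.choose_pos (by omega)).ne'
      have hf := Nat.factorization_choose_prime_pow (n := m + 1) (k := p ^ m) hp (by omega)
        (by omega)
      rw [hp.factorization_pow, Finsupp.single_eq_same] at hf
      have hj1 := (hp.pow_dvd_iff_le_factorization hpos).1 hdc
      calc p ^ j ∣ p ^ 1 := pow_dvd_pow p (by omega)
        _ = p := pow_one p
    · have : k = 1 := by omega
      subst this
      rw [pow_one]
      exact Nat.gcd_dvd_left _ _
  · apply Nat.dvd_gcd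
    · exact dvd_pow_self p (by omega)
    · apply Finset.dvd_gcd
      intro i hi
      rw [Finset.mem_filter] at hi
      exact hp.dvd_choose_pow (by omega) (by omega)
end

section
/- Let n ≥ 2 be an even integer with n ≠ 8. Then the greatest common divisor of the set {n+1} ∪ {C(n+1, i) : i ∈ ℕ, 4 ≤ i, 2i ≤ n+1} equals η(n), where η(n) = p if n + 1 = p^k for some prime p and integer k ≥ 1, and η(n) = 1 otherwise. -/
open scoped Classical

/-- `eta n = p` if `n + 1 = p ^ k` for some prime `p` and `k ≥ 1`, and `eta n = 1`
otherwise. -/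
noncomputable def eta (n : ℕ) : ℕ :=
  if h : ∃ p : ℕ, ∃ k : ℕ, p.Prime ∧ 1 ≤ k ∧ n + 1 = p ^ k then h.choose else 1

lemma aux_lucas_s6 {p : ℕ} (hp : p.Prime) (m k r : ℕ) (hr : r < p)
    (h : ¬ p ∣ Nat.choose m k) : ¬ p ∣ Nat.choose (p * m + r) (p * k) := by
  have : Fact p.Prime := ⟨hp⟩
  have := Choose.choose_modEq_choose_mod_mul_choose_div_nat (n := p * m + r) (k := p * k) (p := p)
  rw [Nat.mul_mod_right, Nat.choose_zero_right, one_mul, Nat.mul_add_div hp.pos,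
    Nat.div_eq_of_lt hr, add_zero, Nat.mul_div_cancel_left _ hp.pos] at this
  rwa [this.dvd_iff dvd_rfl]

lemma aux_pow {p : ℕ} (hp : p.Prime) (m a : ℕ) (h : ¬ p ∣ m) :
    ¬ p ∣ Nat.choose (p ^ a * m) (p ^ a) := by
  induction a with
  | zero => simpa using h
  | succ a ih =>
    have := aux_lucas_s6 hp _ _ 0 hp.pos ih
    rwa [add_zero, ← mul_assoc, ← pow_succ'] at this

lemma aux_main1 {p N : ℕ} (hp : p.Prime) (hN : Odd N) (hd : p ∣ N)
    (hnp : ∀ k, 1 ≤ k → N ≠ p ^ k) :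
    ∃ i, 4 ≤ i ∧ 2 * i ≤ N ∧ ¬ p ∣ Nat.choose N i := by
  have hN0 : N ≠ 0 := by rintro rfl; simp at hN
  obtain ⟨a, m, hm, rfl⟩ := Nat.exists_eq_pow_mul_and_not_dvd hN0 p hp.ne_one
  have ha : 1 ≤ a := by
    rcases Nat.eq_zero_or_pos a with rfl | h
    · simp at hd; exact absurd hd hm
    · exact h
  have hm1 : m ≠ 1 := by rintro rfl; exact hnp a ha (by simp)
  obtain ⟨hpo, hmo⟩ := Nat.odd_mul.1 hN
  have hm3 : 3 ≤ m := by obtain ⟨t, rfl⟩ := hmo; omega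
  by_cases h4 : 4 ≤ p ^ a
  · exact ⟨p ^ a, h4, by nlinarith, aux_pow hp m a hm⟩
  have hp2 := hp.two_le
  have hle : p ≤ p ^ a := Nat.le_self_pow (by omega) p
  have hpa : p ^ a = 3 := by obtain ⟨t, ht⟩ := hpo; omega
  have hp3 : p = 3 := by
    have : p ∣ 3 := hpa ▸ dvd_pow_self p (by omega)
    exact (Nat.prime_dvd_prime_iff_eq hp Nat.prime_three).1 this
  subst hp3
  rw [hpa]
  suffices H : ∃ j, 2 ≤ j ∧ 2 * j ≤ m ∧ ¬ 3 ∣ Nat.choose m j by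
    obtain ⟨j, h1, h2, h3⟩ := H
    exact ⟨3 * j, by omega, by omega, aux_lucas_s6 hp m j 0 (by norm_num) h3⟩
  have hmod : m % 3 = 1 ∨ m % 3 = 2 := by omega
  rcases hmod with h | h
  · have hm' : m / 3 ≠ 0 := by omega
    have hm2 : m = 3 * (m / 3) + 1 := by omega
    obtain ⟨b, c, hc, hbc⟩ := Nat.exists_eq_pow_mul_and_not_dvd hm' 3 (by norm_num)
    have hb : 1 ≤ 3 ^ b := Nat.one_le_pow _ _ (by norm_num)
    have hc2 : 2 ≤ c := by
      by_contra hlt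
      have : c = 0 ∨ c = 1 := by omega
      rcases this with rfl | rfl
      · simp at hc
      · have h3 : Odd (3 ^ b) := Odd.pow (by decide)
        obtain ⟨t, ht⟩ := h3
        obtain ⟨s, hs⟩ := hmo
        omega
    refine ⟨3 * 3 ^ b, by omega, by nlinarith, ?_⟩
    rw [hm2, hbc]
    exact aux_lucas_s6 hp _ _ 1 (by norm_num) (aux_pow hp c b hc)
  · have hm5 : 4 ≤ m := by omega
    refine ⟨2, le_rfl, by omega, ?_⟩
    have := Nat.choose_two_right m
    have h2 := Nat.triangle_succ (m - 1)
    obtain ⟨q, rfl⟩ : ∃ q, m = 3 * q + 2 := ⟨m / 3, by omega⟩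
    have : Fact (Nat.Prime 3) := ⟨hp⟩
    have := Choose.choose_modEq_choose_mod_mul_choose_div_nat (n := 3 * q + 2) (k := 2) (p := 3)
    rw [this.dvd_iff dvd_rfl]
    rw [h]
    norm_num

lemma aux_main2 {p a : ℕ} (hp : p.Prime) (ho : Odd (p ^ a)) (ha : 2 ≤ a) (h9 : p ^ a ≠ 9) :
    ∃ i, 4 ≤ i ∧ 2 * i ≤ p ^ a ∧ ¬ p ^ 2 ∣ Nat.choose (p ^ a) i := by
  obtain ⟨b, rfl⟩ : ∃ b, a = b + 2 := ⟨a - 2, by omega⟩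
  have hpo : Odd p := by
    rcases hp.eq_two_or_odd' with rfl | h
    · exact absurd ho (by simp [Nat.not_odd_iff_even, Nat.even_pow])
    · exact h
  have hp3 : 3 ≤ p := by
    have := hp.two_le
    obtain ⟨t, rfl⟩ := hpo; omega
  have hpb : p ≤ p ^ (b + 1) := Nat.le_self_pow (by omega) p
  have h4 : 4 ≤ p ^ (b + 1) := by
    by_contra hlt
    have h1 : p = 3 := by omega
    subst h1
    have : 3 ^ (b + 1) = 3 := by omega
    apply h9
    rw [pow_succ, this]
    norm_num
  have hpos : 0 < p ^ (b + 1) := by omega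
  refine ⟨p ^ (b + 1), h4, by rw [pow_succ p (b + 1)]; nlinarith, ?_⟩
  have hle : p ^ (b + 1) ≤ p ^ (b + 2) := Nat.pow_le_pow_right hp.pos (by omega)
  intro hd
  have hne : Nat.choose (p ^ (b + 2)) (p ^ (b + 1)) ≠ 0 := (Nat.choose_pos hle).ne'
  have := (hp.pow_dvd_iff_le_factorization hne).1 hd
  rw [Nat.factorization_choose_prime_pow hp hle hpos.ne'] at this
  simp [hp.factorization_self] at this

/-- For even `n ≥ 2` with `n ≠ 8`, the gcd of `{n+1} ∪ {C(n+1, i) : 4 ≤ i, 2i ≤ n+1}`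
equals `eta n`. -/
theorem gcd_choose_eq_eta (n : ℕ) (hn : 2 ≤ n) (hev : Even n) (hne : n ≠ 8) :
    Nat.gcd (n + 1)
      (Finset.gcd ((Finset.range (n + 2)).filter (fun i => 4 ≤ i ∧ 2 * i ≤ n + 1))
        (fun i => Nat.choose (n + 1) i)) = eta n := by
  have hodd : Odd (n + 1) := hev.add_one
  set G := Nat.gcd (n + 1)
      (Finset.gcd ((Finset.range (n + 2)).filter (fun i => 4 ≤ i ∧ 2 * i ≤ n + 1))
        (fun i => Nat.choose (n + 1) i)) with hG
  have hG1 : G ∣ n + 1 := Nat.gcd_dvd_left _ _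
  have hG2 : ∀ i, 4 ≤ i → 2 * i ≤ n + 1 → G ∣ Nat.choose (n + 1) i := by
    intro i h1 h2
    refine (Nat.gcd_dvd_right _ _).trans (Finset.gcd_dvd ?_)
    simp only [Finset.mem_filter, Finset.mem_range]
    exact ⟨by omega, h1, h2⟩
  unfold eta
  split_ifs with h
  · obtain ⟨k, hp, hk, hpk⟩ := h.choose_spec
    set p := h.choose
    have hpG : p ∣ G := by
      refine Nat.dvd_gcd (hpk ▸ dvd_pow_self p (by omega)) (Finset.dvd_gcd ?_)
      intro i hi
      simp only [Finset.mem_filter, Finset.mem_range] at hi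
      rw [hpk]
      exact hp.dvd_choose_pow (by omega) (by omega)
    obtain ⟨j, hj, hGj⟩ := (Nat.dvd_prime_pow hp).1 (hpk ▸ hG1)
    rcases Nat.lt_or_ge j 2 with hj2 | hj2
    · have : j = 0 ∨ j = 1 := by omega
      rcases this with rfl | rfl
      · rw [hGj, pow_zero] at hpG
        exact absurd (Nat.dvd_one.1 hpG) hp.ne_one
      · rw [hGj, pow_one]
    · obtain ⟨i, h1, h2, h3⟩ := aux_main2 hp (hpk ▸ hodd) (hj2.trans hj) (by omega)
      rw [← hpk] at h2 h3
      exact absurd (((pow_dvd_pow p hj2).trans hGj.symm.dvd).trans (hG2 i h1 h2)) h3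
  · by_contra hG1'
    obtain ⟨p, hp, hpG⟩ := Nat.exists_prime_and_dvd hG1'
    obtain ⟨i, h1, h2, h3⟩ := aux_main1 hp hodd (hpG.trans hG1)
      (fun k hk he => h ⟨p, k, hp, hk, he⟩)
    exact h3 (hpG.trans (hG2 i h1 h2))
end
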